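/- arXiv:1201.1139 — 4 statements merged into one kernel-verified Lean document; each statement's English description precedes it below -/
import Mathlib

section
/- Let p ≥ 3 be a prime, let H be a symmetric generating set of SL₂(𝔽_p) containing the identity, and suppose g ∈ H satisfies tr(g) ≠ 0 and tr(g)² ≠ 4. Let N = |{h ∈ H^(2) : hg = gh and tr(h)² ≠ 4}|. Then 2744 · N³ · |H^(3)|¹² ≥ |H|¹³, unless |H^(3)|^168 ≥ |H|^169. (Equivalently, with α = |H^(3)|/|H|, the number of regular semisimple elements of H^(2) in the maximal torus through g — its centralizer — is at least 14^(−1)·α^(−4)·|H|^(1/3) unless α ≥ |H|^(1/168).) -/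
open Pointwise

instance {n : Type*} [DecidableEq n] [Fintype n] {R : Type*} [CommRing R] [DecidableEq R] :
    DecidableEq (Matrix.SpecialLinearGroup n R) := Subtype.instDecidableEq

/-!
Write `K = |H³| / |H|` and let `A` be the set of elements of `H³` with the trace `t` of `g`. Since
`A` contains every conjugate of `g` by `H`, orbit–stabilizer counting gives
`|H| ≤ |A| · |{h ∈ H² | h * g = g * h}|`, and `±1` are the only elements commuting with `g` that
are not regular semisimple. It remains to prove the Larsen–Pink type estimate `|A|³ ≪ K⁸|H|²`.

Map `(a, b, c) ∈ A³` to `(x, y) = (a⁻¹b, a⁻¹c)`. On a fibre, `a`, `ax` and `ay` all have trace `t`,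
so the differences of two such `a` are trace-orthogonal to `1`, `x` and `y`. If three of them are
not collinear, then `1, x, y` are linearly dependent, since `2 + 3 > dim M₂(F)`. Either way
`SL₂(F)` contains three collinear points, which forces a nilpotent direction `n`, and the line
`im n` is fixed by `a`, `x` and `y`. Away from such triples the fibres therefore have at most two
points, and the number of triples is `O(|A⁻¹A|²)`.

In the remaining triples either two entries coincide, or `b` and `c` each share a fixed line with
`a`. The element `a` fixes at most two lines `ℓ`, and there are two possible eigenvalues on each of
them. If `S ⊆ A` acts on `ℓ` by a fixed eigenvalue and `h ∈ H` moves `ℓ`, then `(b, c) ↦ b h c⁻¹`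
is injective on `S × S` with values in `H⁷`, so that `|S|² ≤ |H⁷|`.
-/

namespace LarsenPink

open Module Matrix
open scoped LinearAlgebra.Projectivization MatrixGroups Finset

theorem sq_card_le_of_forall_sq_card_fiber_le {α β : Type*} [DecidableEq β] {s : Finset α}
    {t : Finset β} {f : α → β} {k E : ℕ} (hf : ∀ x ∈ s, f x ∈ t) (ht : #t ≤ k)
    (hE : ∀ y ∈ t, #{x ∈ s | f x = y} ^ 2 ≤ E) : #s ^ 2 ≤ k ^ 2 * E := by
  have hs : #s ≤ E.sqrt * #t := Finset.card_le_mul_card_image_of_maps_to hf _ fun y hy =>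
    Nat.le_sqrt'.2 (hE y hy)
  calc #s ^ 2 ≤ (E.sqrt * k) ^ 2 := by gcongr; exact hs.trans (by gcongr)
    _ = k ^ 2 * E.sqrt ^ 2 := by ring
    _ ≤ k ^ 2 * E := by gcongr; exact Nat.sqrt_le' E

section Group

variable {G : Type*} [Group G]

theorem exists_smul_ne_of_closure_eq_top {X : Type*} [MulAction G X] [MulAction.IsPretransitive G X]
    [Nontrivial X] {H : Set G} (hH : Subgroup.closure H = ⊤) (x : X) : ∃ h ∈ H, h • x ≠ x := by
  by_contra! hfix
  have hstab : MulAction.stabilizer G x = ⊤ := top_unique (hH ▸ (Subgroup.closure_le _).2 hfix)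
  obtain ⟨y, hy⟩ := exists_ne x
  obtain ⟨k, rfl⟩ := MulAction.exists_smul_eq G x y
  exact hy (MulAction.mem_stabilizer_iff.1 (hstab ▸ Subgroup.mem_top k))

theorem card_le_card_image_conj_mul_card_filter_commute [DecidableEq G] (H : Finset G) (g : G) :
    #H ≤ #(H.image fun h => h * g * h⁻¹) * #{h ∈ H⁻¹ * H | h * g = g * h} := by
  rw [mul_comm]
  refine Finset.card_le_mul_card_image _ _ (Finset.forall_mem_image.2 fun x hx => ?_)
  refine Finset.card_le_card_of_injOn (x⁻¹ * ·) (fun y hy => ?_) (mul_right_injective _).injOn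
  obtain ⟨hyH, hyx⟩ := Finset.mem_filter.1 hy
  refine Finset.mem_coe.2 <| Finset.mem_filter.2
    ⟨Finset.mul_mem_mul (Finset.inv_mem_inv hx) hyH, ?_⟩
  rw [mul_inv_eq_iff_eq_mul] at hyx
  simp [hyx, mul_assoc]

theorem one_le_of_card_pow_three_le [DecidableEq G] {H : Finset G} {K : ℝ} (h1 : 1 ∈ H)
    (hK : #(H ^ 3) ≤ K * #H) : 1 ≤ K := by
  have hpos : (0 : ℝ) < #H := by exact_mod_cast Finset.card_pos.2 ⟨1, h1⟩
  have hH : (#H : ℝ) ≤ #(H ^ 3) := by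
    exact_mod_cast Finset.card_le_card (Finset.subset_pow h1 three_ne_zero)
  exact le_of_mul_le_mul_right (by linarith) hpos

end Group

section CommRing

variable {R : Type*} [CommRing R]

theorem det_add_smul_fin_two (a n : Matrix (Fin 2) (Fin 2) R) (c : R) :
    (a + c • n).det = a.det + c * (a.trace * n.trace - (n * a).trace) + c ^ 2 * n.det := by
  simp only [det_fin_two, trace_fin_two, Matrix.add_apply, Matrix.smul_apply, smul_eq_mul,
    mul_apply, Fin.sum_univ_two]
  ring

theorem mul_mul_self_fin_two (n m : Matrix (Fin 2) (Fin 2) R) :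
    n * m * n = (n * m).trace • n - n.det • m.adjugate := by
  ext i j
  fin_cases i <;> fin_cases j <;>
    simp [det_fin_two, trace_fin_two, mul_apply, adjugate_fin_two] <;> ring

theorem trace_mul_self_fin_two (n : Matrix (Fin 2) (Fin 2) R) :
    (n * n).trace = n.trace ^ 2 - 2 * n.det := by
  simp only [det_fin_two, trace_fin_two, mul_apply, Fin.sum_univ_two]
  ring

theorem det_eq_zero_of_det_add_smul_eq [NoZeroDivisors R] {a n : Matrix (Fin 2) (Fin 2) R} {c : R}
    (hc₀ : c ≠ 0) (hc₁ : c ≠ 1) (h₁ : (a + n).det = a.det) (hc : (a + c • n).det = a.det) :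
    n.det = 0 ∧ (n * a).trace = a.trace * n.trace := by
  have e₁ := det_add_smul_fin_two a n 1
  have ec := det_add_smul_fin_two a n c
  rw [one_smul, h₁] at e₁
  rw [hc] at ec
  have hdet : n.det = 0 := by
    have : c * (c - 1) * n.det = 0 := by linear_combination c * e₁ - ec
    simpa [hc₀, sub_eq_zero, hc₁] using this
  exact ⟨hdet, by linear_combination e₁ + hdet⟩

end CommRing

variable {F : Type*} [Field F]

theorem card_add_card_le_of_trace_mul_eq_zero {ι κ n : Type*} [Fintype ι] [Fintype κ] [Fintype n]
    {u : ι → Matrix n n F} {w : κ → Matrix n n F} (hu : LinearIndependent F u)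
    (hw : LinearIndependent F w) (huw : ∀ i j, (u i * w j).trace = 0) :
    Fintype.card ι + Fintype.card κ ≤ Fintype.card n ^ 2 := by
  let B : LinearMap.BilinForm F (Matrix n n F) :=
    (LinearMap.mul F (Matrix n n F)).compr₂ (traceLinearMap n F F)
  have hB : B.Nondegenerate :=
    ⟨fun a ha => ext_iff_trace_mul_right.2 fun x => by simpa [B] using ha x,
      fun a ha => ext_iff_trace_mul_left.2 fun x => by simpa [B] using ha x⟩
  have hle : Submodule.span F (Set.range w) ≤ B.orthogonal (Submodule.span F (Set.range u)) := by
    rw [Submodule.span_le]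
    rintro _ ⟨j, rfl⟩
    have : Submodule.span F (Set.range u) ≤ LinearMap.ker (B.flip (w j)) :=
      Submodule.span_le.2 (Set.range_subset_iff.2 fun i => huw i j)
    exact fun a ha => this ha
  have hrank := Submodule.finrank_mono hle
  have hcard := Submodule.finrank_le (Submodule.span F (Set.range u))
  rw [LinearMap.BilinForm.finrank_orthogonal hB, finrank_span_eq_card hw] at hrank
  rw [finrank_span_eq_card hu] at hrank hcard
  rw [finrank_matrix, finrank_self, mul_one, ← sq] at hrank hcard
  lia

theorem linearIndependent_cons_one {n : Type*} [Fintype n] [DecidableEq n] {k : ℕ}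
    {v : Fin k → Matrix n n F} {a : Matrix n n F} (hv : LinearIndependent F v) (ha : a.trace ≠ 0)
    (hav : ∀ i, (a * v i).trace = 0) : LinearIndependent F (Fin.cons 1 v : Fin (k + 1) → _) := by
  have hle : Submodule.span F (Set.range v) ≤
      LinearMap.ker (traceLinearMap n F F ∘ₗ LinearMap.mulLeft F a) :=
    Submodule.span_le.2 (Set.range_subset_iff.2 hav)
  exact linearIndependent_finCons.2 ⟨hv, fun h => ha (by simpa using hle h)⟩

theorem eq_of_forall_smul_eq_of_linearIndependent {n : Type*} [Fintype n] [DecidableEq n]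
    {A B : Matrix n n F} {b : n → n → F} (hb : LinearIndependent F b)
    (h : ∀ i, A • b i = B • b i) : A = B := by
  classical
  refine Matrix.toLin'.injective ((basisOfPiSpaceOfLinearIndependent hb).ext fun i => ?_)
  simpa using h i

theorem eq_of_smul_eq_of_linearIndependent_pair {A B : Matrix (Fin 2) (Fin 2) F} {v w : Fin 2 → F}
    (hvw : LinearIndependent F ![v, w]) (hv : A • v = B • v) (hw : A • w = B • w) : A = B :=
  eq_of_forall_smul_eq_of_linearIndependent hvw (Fin.forall_fin_two.2 ⟨hv, hw⟩)

theorem card_roots_charpoly_le {n : Type*} [Fintype n] [DecidableEq n] [DecidableEq F]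
    (A : Matrix n n F) : #A.charpoly.roots.toFinset ≤ Fintype.card n :=
  (Multiset.toFinset_card_le _).trans <|
    (Polynomial.card_roots' _).trans_eq (charpoly_natDegree_eq_dim _)

theorem mem_roots_charpoly_of_smul_eq {n : Type*} [Fintype n] [DecidableEq n] [DecidableEq F]
    {A : Matrix n n F} {v : n → F} (hv : v ≠ 0) {μ : F} (h : A • v = μ • v) :
    μ ∈ A.charpoly.roots.toFinset := by
  rw [Multiset.mem_toFinset, Polynomial.mem_roots A.charpoly_monic.ne_zero, Polynomial.IsRoot,
    eval_charpoly, ← exists_mulVec_eq_zero_iff]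
  refine ⟨v, hv, ?_⟩
  rw [sub_mulVec, sub_eq_zero, scalar_apply, ← smul_one_eq_diagonal, smul_mulVec, one_mulVec]
  exact h.symm

theorem exists_smul_one_or_linearIndependent (g : Matrix (Fin 2) (Fin 2) F) :
    (∃ c : F, g = c • 1) ∨ ∃ v : Fin 2 → F, LinearIndependent F ![v, g • v] := by
  by_contra! ⟨hg, hdep⟩
  obtain ⟨c, hc⟩ := (toLin' g).exists_eq_smul_id_of_forall_notLinearIndependent hdep
  exact hg c (toLin'.injective (by simpa [Module.End.one_eq_id] using hc))

theorem exists_eq_smul_one_add_smul_of_commute {g h : Matrix (Fin 2) (Fin 2) F}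
    (hg : ∀ c : F, g ≠ c • 1) (hgh : Commute h g) : ∃ α β : F, h = α • 1 + β • g := by
  obtain ⟨c, hc⟩ | ⟨v, hv⟩ := exists_smul_one_or_linearIndependent g
  · exact absurd hc (hg c)
  obtain ⟨α, β, hαβ⟩ : ∃ α β : F, α • v + β • g • v = h • v := by
    have hspan := hv.span_eq_top_of_card_eq_finrank' (by simp)
    rw [range_cons_cons_empty] at hspan
    exact Submodule.mem_span_pair.1 (hspan ▸ Submodule.mem_top)
  refine ⟨α, β, eq_of_smul_eq_of_linearIndependent_pair hv ?_ ?_⟩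
  · simpa [add_smul] using hαβ.symm
  · calc h • g • v = g • h • v := by rw [← mul_smul, hgh.eq, mul_smul]
      _ = (α • 1 + β • g) • g • v := by
        simp only [← hαβ, add_smul, smul_add, smul_assoc, one_smul, smul_comm g]

section Projectivization

variable {V : Type*} [AddCommGroup V] [Module F V]

theorem nontrivial_projectivization_of_one_lt_finrank (hV : 1 < finrank F V) :
    Nontrivial (ℙ F V) := by
  have := nontrivial_of_finrank_pos (zero_lt_one.trans hV)
  obtain ⟨v, hv⟩ := exists_ne (0 : V)
  obtain ⟨w, hvw⟩ := exists_linearIndependent_pair_of_one_lt_finrank hV hv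
  refine ⟨.mk F w (hvw.ne_zero 1), .mk F v hv, fun h => ?_⟩
  obtain ⟨c, hc⟩ := (Projectivization.mk_eq_mk_iff' ..).1 h
  exact (LinearIndependent.pair_iff' hv).1 hvw c hc

theorem smul_eq_self_iff {G : Type*} [Group G] [DistribMulAction G V] [SMulCommClass G F V] (g : G)
    (ℓ : ℙ F V) : g • ℓ = ℓ ↔ ∃ μ : F, g • ℓ.rep = μ • ℓ.rep := by
  have hmk := Projectivization.mk_eq_mk_iff' F (g • ℓ.rep) ℓ.rep
    ((smul_ne_zero_iff_ne g).2 ℓ.rep_nonzero) ℓ.rep_nonzero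
  rw [← Projectivization.smul_mk _ ℓ.rep_nonzero, ℓ.mk_rep] at hmk
  simpa only [eq_comm] using hmk

instance : Nontrivial (ℙ F (Fin 2 → F)) :=
  nontrivial_projectivization_of_one_lt_finrank (by simp)

end Projectivization

variable {a b c g h : SL(2, F)}

theorem ne_smul_one_of_trace_sq_ne_four (hg : g.1.trace ^ 2 ≠ 4) (c : F) : g.1 ≠ c • 1 := by
  intro hc
  have hdet := g.det_coe
  rw [hc] at hg hdet
  simp only [det_smul, Fintype.card_fin, det_one, mul_one, trace_smul, trace_one,
    smul_eq_mul] at hg hdet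
  apply hg
  push_cast
  linear_combination 4 * hdet

theorem exists_forall_smul_eq_self_of_trace_mul_eq_zero {n : Matrix (Fin 2) (Fin 2) F} (hn : n ≠ 0)
    (htr : n.trace = 0) (hdet : n.det = 0) :
    ∃ ℓ : ℙ F (Fin 2 → F), ∀ a : SL(2, F), (n * a.1).trace = 0 → a • ℓ = ℓ := by
  obtain ⟨w, hw⟩ : ∃ w : Fin 2 → F, n • w ≠ 0 := by
    by_contra! h
    exact hn (ext_iff_smul.2 fun w => by simp [h])
  refine ⟨.mk F (n • w) hw, fun a ha => ?_⟩
  have hnan : n * a.1 * n = 0 := by simp [mul_mul_self_fin_two, ha, hdet]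
  have hnn : n * n = 0 := by simpa [htr, hdet] using mul_mul_self_fin_two n 1
  by_contra hne
  have hind : LinearIndependent F ![n • w, a • n • w] := by
    rw [LinearIndependent.pair_iff' hw]
    intro c hc
    exact hne ((Projectivization.mk_eq_mk_iff' ..).2 ⟨c, hc⟩)
  refine hn (eq_of_smul_eq_of_linearIndependent_pair hind ?_ ?_)
  · rw [← mul_smul, hnn, zero_smul, zero_smul]
  · change n • a.1 • n • w = _
    rw [← mul_smul, ← mul_smul, hnan, zero_smul, zero_smul]

theorem encard_fixedBy_le_two (ha : a.1.trace ^ 2 ≠ 4) :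
    (MulAction.fixedBy (ℙ F (Fin 2 → F)) a).encard ≤ 2 := by
  classical
  choose! μ hμ using fun ℓ : ℙ F (Fin 2 → F) => (smul_eq_self_iff a ℓ).1
  calc (MulAction.fixedBy (ℙ F (Fin 2 → F)) a).encard
      ≤ (a.1.charpoly.roots.toFinset : Set F).encard := by
        refine Set.encard_le_encard_of_injOn (f := μ) (fun ℓ hℓ =>
          mem_roots_charpoly_of_smul_eq ℓ.rep_nonzero (hμ ℓ hℓ)) fun ℓ₁ h₁ ℓ₂ h₂ h => ?_
        by_contra hne
        have hind := Projectivization.linearIndependent_pair_iff_ne.2 hne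
        refine ne_smul_one_of_trace_sq_ne_four ha (μ ℓ₁)
          (eq_of_smul_eq_of_linearIndependent_pair hind ?_ ?_)
        · rw [smul_assoc, one_smul]
          exact hμ ℓ₁ h₁
        · rw [smul_assoc, one_smul, h]
          exact hμ ℓ₂ h₂
    _ ≤ 2 := by
        rw [Set.encard_coe_eq_coe_finsetCard]
        exact_mod_cast card_roots_charpoly_le a.1

theorem exists_eq_add_smul_and_det_sub_eq_zero (hab : a ≠ b) (hac : a ≠ c) (hbc : b ≠ c)
    (h : ¬ LinearIndependent F ![b.1 - a.1, c.1 - a.1]) :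
    ∃ s : F, c.1 = a.1 + s • (b.1 - a.1) ∧ (b.1 - a.1).det = 0 ∧
      ((b.1 - a.1) * a.1).trace = a.1.trace * (b.1 - a.1).trace := by
  have hne : b.1 - a.1 ≠ 0 := sub_ne_zero.2 (Subtype.coe_injective.ne hab.symm)
  obtain ⟨s, hs⟩ : ∃ s : F, s • (b.1 - a.1) = c.1 - a.1 := by
    simpa [LinearIndependent.pair_iff' hne] using h
  have hc : c.1 = a.1 + s • (b.1 - a.1) := by rw [hs, add_sub_cancel]
  refine ⟨s, hc, det_eq_zero_of_det_add_smul_eq (c := s) ?_ ?_ ?_ ?_⟩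
  · rintro rfl
    exact hac (Subtype.ext (by simpa using hc.symm))
  · rintro rfl
    exact hbc (Subtype.ext (by simpa using hc.symm))
  · rw [add_sub_cancel, a.2, b.2]
  · rw [← hc, a.2, c.2]

theorem exists_smul_eq_self_of_not_linearIndependent_sub_one {x y : SL(2, F)} (hx : x ≠ 1)
    (hy : y ≠ 1) (hxy : x ≠ y) (h : ¬ LinearIndependent F ![x.1 - 1, y.1 - 1]) :
    ∃ ℓ : ℙ F (Fin 2 → F), x • ℓ = ℓ ∧ y • ℓ = ℓ ∧
      ∀ a : SL(2, F), ((x.1 - 1) * a.1).trace = 0 → a • ℓ = ℓ := by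
  obtain ⟨s, hs, hdet, htrace⟩ :=
    exists_eq_add_smul_and_det_sub_eq_zero hx.symm hy.symm hxy h
  change y.1 = 1 + s • (x.1 - 1) at hs
  change (x.1 - 1).det = 0 at hdet
  change ((x.1 - 1) * 1).trace = (1 : Matrix (Fin 2) (Fin 2) F).trace * _ at htrace
  have htr : (x.1 - 1).trace = 0 := by
    rw [mul_one, trace_one, Fintype.card_fin, Nat.cast_two] at htrace
    linear_combination -htrace
  have hsq : ((x.1 - 1) * (x.1 - 1)).trace = 0 := by
    rw [trace_mul_self_fin_two, htr, hdet]
    ring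
  have hne : x.1 - 1 ≠ 0 := sub_ne_zero.2 (Subtype.coe_injective.ne hx)
  obtain ⟨ℓ, hℓ⟩ := exists_forall_smul_eq_self_of_trace_mul_eq_zero hne htr hdet
  refine ⟨ℓ, hℓ x ?_, hℓ y ?_, hℓ⟩
  · nth_rw 2 [← add_sub_cancel 1 x.1]
    rw [mul_add, mul_one, trace_add, htr, hsq, add_zero]
  · rw [hs, mul_add, mul_one, mul_smul_comm, trace_add, trace_smul, htr, hsq, smul_zero, add_zero]

theorem exists_smul_eq_self_of_two_lt_card {T : Finset SL(2, F)} {t : F} {x y : SL(2, F)}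
    (ht : t ≠ 0) (hx : x ≠ 1) (hy : y ≠ 1) (hxy : x ≠ y) (hT : 2 < #T)
    (htr : ∀ a ∈ T, a.1.trace = t) (htrx : ∀ a ∈ T, (a.1 * x.1).trace = t)
    (htry : ∀ a ∈ T, (a.1 * y.1).trace = t) :
    ∃ a ∈ T, ∃ ℓ : ℙ F (Fin 2 → F), a • ℓ = ℓ ∧ x • ℓ = ℓ ∧ y • ℓ = ℓ := by
  obtain ⟨a, ha, b, hb, c, hc, hab, hac, hbc⟩ := Finset.two_lt_card.1 hT
  refine ⟨a, ha, ?_⟩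
  have trace_sub_mul {m : Matrix (Fin 2) (Fin 2) F} (hm : ∀ e ∈ T, (e.1 * m).trace = t) {d}
      (hd : d ∈ T) : ((d.1 - a.1) * m).trace = 0 := by
    rw [sub_mul, trace_sub, hm d hd, hm a ha, sub_self]
  have htr_one : ∀ e ∈ T, (e.1 * 1).trace = t := by simpa using htr
  by_cases hind : LinearIndependent F ![b.1 - a.1, c.1 - a.1]
  · have hdep : ¬ LinearIndependent F ![x.1 - 1, y.1 - 1] := by
      intro hlin
      have hcons : LinearIndependent F (Fin.cons 1 ![x.1 - 1, y.1 - 1] : Fin 3 → _) :=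
        linearIndependent_cons_one hlin (htr a ha ▸ ht) <| Fin.forall_fin_two.2
          ⟨by simp [mul_sub, htr a ha, htrx a ha], by simp [mul_sub, htr a ha, htry a ha]⟩
      -- The two families are trace-orthogonal, but `2 + 3 > 4 = dim M₂(F)`.
      have h := card_add_card_le_of_trace_mul_eq_zero hind hcons fun i j => by
        fin_cases i <;> fin_cases j <;> simp [mul_sub, trace_sub_mul htrx, trace_sub_mul htry,
          hb, hc, htr a ha, htr b hb, htr c hc]
      simp at h
    obtain ⟨ℓ, hxℓ, hyℓ, hℓ⟩ :=
      exists_smul_eq_self_of_not_linearIndependent_sub_one hx hy hxy hdep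
    refine ⟨ℓ, hℓ a ?_, hxℓ, hyℓ⟩
    rw [trace_mul_comm, mul_sub, mul_one, trace_sub, htr a ha, htrx a ha, sub_self]
  · obtain ⟨-, -, hdet, htrace⟩ := exists_eq_add_smul_and_det_sub_eq_zero hab hac hbc hind
    have hn : (b.1 - a.1).trace = 0 := by simpa using trace_sub_mul htr_one hb
    obtain ⟨ℓ, hℓ⟩ := exists_forall_smul_eq_self_of_trace_mul_eq_zero
      (sub_ne_zero.2 (Subtype.coe_injective.ne hab.symm)) hn hdet
    exact ⟨ℓ, hℓ a (by rw [htrace, hn, mul_zero]), hℓ x (trace_sub_mul htrx hb),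
      hℓ y (trace_sub_mul htry hb)⟩

/-- `a` and `b` fix a common point of the projective line. -/
def ShareFixedPoint (a b : SL(2, F)) : Prop :=
  ∃ ℓ : ℙ F (Fin 2 → F), a • ℓ = ℓ ∧ b • ℓ = ℓ

/-- The displacement pair `z` is generic at `a ∈ A`: the points `a`, `b = a * z.1` and
`c = a * z.2` are pairwise distinct elements of `A`, and `b`, `c` do not both share a fixed point
with `a` (the two fixed points being allowed to differ). -/
def IsGenericPair (A : Finset SL(2, F)) (a : SL(2, F)) (z : SL(2, F) × SL(2, F)) : Prop :=
  a * z.1 ∈ A ∧ a * z.2 ∈ A ∧ z.1 ≠ 1 ∧ z.2 ≠ 1 ∧ z.1 ≠ z.2 ∧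
    ¬ (ShareFixedPoint a (a * z.1) ∧ ShareFixedPoint a (a * z.2))

open Classical in
theorem card_filter_isGenericPair_le_two {A : Finset SL(2, F)} {t : F} (ht : t ≠ 0)
    (hA : ∀ b ∈ A, b.1.trace = t) (z : SL(2, F) × SL(2, F)) :
    #{a ∈ A | IsGenericPair A a z} ≤ 2 := by
  by_contra! hcard
  set T := {a ∈ A | IsGenericPair A a z}
  have hT : ∀ a ∈ T, a ∈ A ∧ IsGenericPair A a z := fun a ha => Finset.mem_filter.1 ha
  obtain ⟨a₀, ha₀⟩ := Finset.card_pos.1 (two_pos.trans hcard)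
  obtain ⟨-, -, -, hz₁, hz₂, hz, -⟩ := hT a₀ ha₀
  obtain ⟨a, ha, ℓ, haℓ, hℓ₁, hℓ₂⟩ := exists_smul_eq_self_of_two_lt_card ht hz₁ hz₂ hz hcard
    (fun a ha => hA a (hT a ha).1) (fun a ha => hA _ (hT a ha).2.1)
    (fun a ha => hA _ (hT a ha).2.2.1)
  obtain ⟨-, -, -, -, -, -, hshare⟩ := hT a ha
  exact hshare ⟨⟨ℓ, haℓ, by rw [mul_smul, hℓ₁, haℓ]⟩, ⟨ℓ, haℓ, by rw [mul_smul, hℓ₂, haℓ]⟩⟩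

theorem eq_one_or_eq_neg_one_of_commute (hg : g.1.trace ^ 2 ≠ 4) (hgh : h * g = g * h)
    (hh : h.1.trace ^ 2 = 4) : h = 1 ∨ h = -1 := by
  obtain ⟨α, β, hαβ⟩ := exists_eq_smul_one_add_smul_of_commute
    (ne_smul_one_of_trace_sq_ne_four hg) (congrArg Subtype.val hgh)
  have htr : h.1.trace = 2 * α + β * g.1.trace := by
    rw [hαβ]
    simp [mul_comm]
  have hdet : α ^ 2 + α * β * g.1.trace + β ^ 2 = 1 := by
    have hαβ₁ : (α • 1 + β • g.1).det = 1 := hαβ ▸ h.2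
    rw [det_add_smul_fin_two, g.2, mul_smul_comm, mul_one, det_smul, det_one, trace_smul,
      trace_smul, trace_one] at hαβ₁
    simp only [Fintype.card_fin, smul_eq_mul] at hαβ₁
    push_cast at hαβ₁
    linear_combination hαβ₁
  obtain rfl : β = 0 := by
    have hdisc : β ^ 2 * (g.1.trace ^ 2 - 4) = 0 := by
      rw [htr] at hh
      linear_combination hh - 4 * hdet
    simpa [sub_eq_zero, hg] using hdisc
  have hα : α = 1 ∨ α = -1 := sq_eq_one_iff.1 (by linear_combination hdet)
  refine hα.imp (fun h1 => Subtype.ext ?_) fun h1 => Subtype.ext ?_ <;> simp [hαβ, h1]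

section Counting

variable [DecidableEq F]

theorem sq_card_le_card_mul_singleton_mul_inv {S : Finset SL(2, F)} {ℓ : ℙ F (Fin 2 → F)} {μ : F}
    (hS : ∀ b ∈ S, b • ℓ.rep = μ • ℓ.rep) (hh : h • ℓ ≠ ℓ) :
    #S ^ 2 ≤ #(S * {h} * S⁻¹) := by
  have hind : LinearIndependent F ![ℓ.rep, h • ℓ.rep] := by
    rw [LinearIndependent.pair_iff' ℓ.rep_nonzero]
    exact fun c hc => hh ((smul_eq_self_iff h ℓ).2 ⟨c, hc.symm⟩)
  rw [sq, ← Finset.card_product]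
  refine Finset.card_le_card_of_injOn (fun z => z.1 * h * z.2⁻¹) (fun z hz => ?_) ?_
  · rw [Finset.mem_coe, Finset.mem_product] at hz
    exact Finset.mul_mem_mul (Finset.mul_mem_mul hz.1 (Finset.mem_singleton_self h))
      (Finset.inv_mem_inv hz.2)
  rintro ⟨x, y⟩ hxy ⟨x', y'⟩ hxy' hz
  rw [Finset.mem_coe, Finset.mem_product] at hxy hxy'
  have hxx' : x • h • ℓ.rep = x' • h • ℓ.rep :=
    calc x • h • ℓ.rep = (x * h * y⁻¹) • y • ℓ.rep := by simp only [mul_smul, inv_smul_smul]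
      _ = (x' * h * y'⁻¹) • y' • ℓ.rep := by
        rw [hS y hxy.2, hS y' hxy'.2]
        exact congrArg (· • μ • ℓ.rep) hz
      _ = x' • h • ℓ.rep := by simp only [mul_smul, inv_smul_smul]
  obtain rfl : x = x' := Subtype.ext <| eq_of_smul_eq_of_linearIndependent_pair hind
    ((hS x hxy.1).trans (hS x' hxy'.1).symm) hxx'
  simpa using hz

open Classical in
theorem sq_card_filter_smul_eq_self_le {A : Finset SL(2, F)} {t : F} (hA : ∀ b ∈ A, b.1.trace = t)
    {ℓ : ℙ F (Fin 2 → F)} (hh : h • ℓ ≠ ℓ) :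
    #{b ∈ A | b • ℓ = ℓ} ^ 2 ≤ 4 * #(A * {h} * A⁻¹) := by
  obtain hempty | ⟨a, ha⟩ := A.eq_empty_or_nonempty
  · simp [hempty]
  choose! μ hμ using fun b : SL(2, F) => (smul_eq_self_iff b ℓ).1
  refine sq_card_le_of_forall_sq_card_fiber_le (f := μ) (t := a.1.charpoly.roots.toFinset)
    (k := 2) (fun b hb => ?_) (card_roots_charpoly_le a.1) fun y _ => ?_
  · rw [Finset.mem_filter] at hb
    have hchar : b.1.charpoly = a.1.charpoly := by
      rw [charpoly_fin_two, charpoly_fin_two, hA b hb.1, hA a ha, b.2, a.2]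
    exact hchar ▸ mem_roots_charpoly_of_smul_eq ℓ.rep_nonzero (hμ b hb.2)
  · refine (sq_card_le_card_mul_singleton_mul_inv (μ := y) (fun b hb => ?_) hh).trans
      (Finset.card_le_card ?_)
    · simp only [Finset.mem_filter] at hb
      exact hb.2 ▸ hμ b hb.1.2
    · have hsub : {b ∈ {b ∈ A | b • ℓ = ℓ} | μ b = y} ⊆ A := by
        rw [Finset.filter_filter]
        exact Finset.filter_subset _ _
      gcongr

open Classical in
theorem sq_card_filter_shareFixedPoint_le {A : Finset SL(2, F)} {t : F} {D : ℕ} (ht : t ^ 2 ≠ 4)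
    (hA : ∀ b ∈ A, b.1.trace = t)
    (hD : ∀ ℓ : ℙ F (Fin 2 → F), ∃ h : SL(2, F), h • ℓ ≠ ℓ ∧ #(A * {h} * A⁻¹) ≤ D) (ha : a ∈ A) :
    #{b ∈ A | ShareFixedPoint a b} ^ 2 ≤ 16 * D := by
  have hfix := encard_fixedBy_le_two (hA a ha ▸ ht)
  have hfin := Set.finite_of_encard_le_coe hfix
  choose! ℓ hℓa hℓb using fun b (hb : ShareFixedPoint a b) => hb
  refine (sq_card_le_of_forall_sq_card_fiber_le (f := ℓ) (t := hfin.toFinset) (k := 2)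
    (E := 4 * D) (fun b hb => ?_) ?_ fun m _ => ?_).trans_eq (by ring)
  · simpa using hℓa b (Finset.mem_filter.1 hb).2
  · rw [hfin.encard_eq_coe_toFinset_card] at hfix
    exact_mod_cast hfix
  · obtain ⟨h, hh, hcard⟩ := hD m
    calc _ ≤ #{b ∈ A | b • m = m} ^ 2 := by
          gcongr
          intro b hb
          simp only [Finset.mem_filter] at hb ⊢
          exact ⟨hb.1.1, hb.2 ▸ hℓb b hb.1.2⟩
      _ ≤ 4 * #(A * {h} * A⁻¹) := sq_card_filter_smul_eq_self_le hA hh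
      _ ≤ 4 * D := by gcongr

open Classical in
theorem sq_card_le_card_filter_isGenericPair_add {A : Finset SL(2, F)} (ha : a ∈ A) :
    #A ^ 2 ≤ #{z ∈ (A⁻¹ * A) ×ˢ (A⁻¹ * A) | IsGenericPair A a z} + 3 * #A +
      #{b ∈ A | ShareFixedPoint a b} ^ 2 := by
  set P := {z ∈ (A⁻¹ * A) ×ˢ (A⁻¹ * A) | IsGenericPair A a z}
  set S := {b ∈ A | ShareFixedPoint a b} with hS
  have hcover : A ×ˢ A ⊆ P.image (fun z => (a * z.1, a * z.2)) ∪
      (({a} ×ˢ A ∪ A ×ˢ {a} ∪ A.diag) ∪ S ×ˢ S) := by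
    rintro ⟨b, c⟩ hbc
    obtain ⟨hb, hc⟩ := Finset.mem_product.1 hbc
    by_cases hgen : IsGenericPair A a (a⁻¹ * b, a⁻¹ * c)
    · refine Finset.mem_union_left _ (Finset.mem_image.2 ⟨(a⁻¹ * b, a⁻¹ * c), ?_, by simp⟩)
      have hmem {d} (hd : d ∈ A) : a⁻¹ * d ∈ A⁻¹ * A :=
        Finset.mul_mem_mul (Finset.inv_mem_inv ha) hd
      exact Finset.mem_filter.2 ⟨Finset.mem_product.2 ⟨hmem hb, hmem hc⟩, hgen⟩
    · simp only [IsGenericPair, mul_inv_cancel_left, ne_eq, inv_mul_eq_one, mul_right_inj] at hgen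
      simp only [Finset.mem_union, Finset.mem_product, Finset.mem_singleton, Finset.mem_diag,
        hS, Finset.mem_filter]
      tauto
  calc #A ^ 2 = #(A ×ˢ A) := by rw [Finset.card_product, sq]
    _ ≤ _ := Finset.card_le_card hcover
    _ ≤ #P + (#A + #A + #A + #S * #S) := by
      refine (Finset.card_union_le _ _).trans (add_le_add Finset.card_image_le ?_)
      refine (Finset.card_union_le _ _).trans (add_le_add ?_ (Finset.card_product _ _).le)
      refine (Finset.card_union_le _ _).trans (add_le_add ?_ A.diag_card.le)
      exact (Finset.card_union_le _ _).trans (by simp)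
    _ = _ := by ring

theorem card_pow_three_le_of_trace_eq {A : Finset SL(2, F)} {t : F} {D : ℕ} (ht : t ≠ 0)
    (ht' : t ^ 2 ≠ 4) (hA : ∀ b ∈ A, b.1.trace = t)
    (hD : ∀ ℓ : ℙ F (Fin 2 → F), ∃ h : SL(2, F), h • ℓ ≠ ℓ ∧ #(A * {h} * A⁻¹) ≤ D) :
    #A ^ 3 ≤ 2 * #(A⁻¹ * A) ^ 2 + 3 * #A ^ 2 + 16 * #A * D := by
  classical
  set Q := (A⁻¹ * A) ×ˢ (A⁻¹ * A)
  have hcount : ∑ a ∈ A, #{z ∈ Q | IsGenericPair A a z} ≤ 2 * #(A⁻¹ * A) ^ 2 :=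
    calc ∑ a ∈ A, #{z ∈ Q | IsGenericPair A a z} = ∑ z ∈ Q, #{a ∈ A | IsGenericPair A a z} :=
          Finset.sum_card_bipartiteAbove_eq_sum_card_bipartiteBelow _
      _ ≤ #Q • 2 := Finset.sum_le_card_nsmul _ _ _ fun z _ =>
          card_filter_isGenericPair_le_two ht hA z
      _ = 2 * #(A⁻¹ * A) ^ 2 := by rw [Finset.card_product, smul_eq_mul]; ring
  calc #A ^ 3 = ∑ _a ∈ A, #A ^ 2 := by rw [Finset.sum_const, smul_eq_mul]; ring
    _ ≤ ∑ a ∈ A, (#{z ∈ Q | IsGenericPair A a z} + (3 * #A + 16 * D)) :=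
      Finset.sum_le_sum fun a ha => by
        have h₁ := sq_card_le_card_filter_isGenericPair_add ha
        have h₂ := sq_card_filter_shareFixedPoint_le ht' hA hD ha
        lia
    _ = ∑ a ∈ A, #{z ∈ Q | IsGenericPair A a z} + #A * (3 * #A + 16 * D) := by
      rw [Finset.sum_add_distrib, Finset.sum_const, smul_eq_mul]
    _ ≤ 2 * #(A⁻¹ * A) ^ 2 + #A * (3 * #A + 16 * D) := by gcongr
    _ = _ := by ring

theorem card_filter_trace_eq_pow_three_le {H : Finset SL(2, F)} {K : ℝ} {t : F}
    (hsym : H⁻¹ = H) (h1 : 1 ∈ H) (hfix : ∀ ℓ : ℙ F (Fin 2 → F), ∃ h ∈ H, h • ℓ ≠ ℓ)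
    (hK : #(H ^ 3) ≤ K * #H) (ht : t ≠ 0) (ht' : t ^ 2 ≠ 4) :
    (#{b ∈ H ^ 3 | b.1.trace = t} : ℝ) ^ 3 ≤ 21 * K ^ 8 * #H ^ 2 := by
  set A := {b ∈ H ^ 3 | b.1.trace = t}
  have hAH : A ⊆ H ^ 3 := Finset.filter_subset _ _
  have hpow : (H ^ 3)⁻¹ = H ^ 3 := by rw [← inv_pow, hsym]
  have hAH' : A⁻¹ ⊆ H ^ 3 := hpow ▸ Finset.inv_subset_inv hAH
  have hcount : #A ^ 3 ≤ 2 * #(H ^ 6) ^ 2 + 3 * #A ^ 2 + 16 * #A * #(H ^ 7) := by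
    refine (card_pow_three_le_of_trace_eq (D := #(H ^ 7)) ht ht'
      (fun b hb => (Finset.mem_filter.1 hb).2) fun ℓ => ?_).trans ?_
    · obtain ⟨h, hh, hℓ⟩ := hfix ℓ
      refine ⟨h, hℓ, Finset.card_le_card ?_⟩
      rw [show 7 = 3 + 1 + 3 from rfl, pow_add, pow_succ H 3]
      exact Finset.mul_subset_mul
        (Finset.mul_subset_mul hAH (Finset.singleton_subset_iff.2 hh)) hAH'
    · rw [pow_add H 3 3]
      gcongr
  have h6 : (#(H ^ 6) : ℝ) ≤ K ^ 4 * #H := Finset.small_pow_of_small_tripling (by simp) hK hsym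
  have h7 : (#(H ^ 7) : ℝ) ≤ K ^ 5 * #H := Finset.small_pow_of_small_tripling (by simp) hK hsym
  have hA : (#A : ℝ) ≤ K * #H := le_trans (by exact_mod_cast Finset.card_le_card hAH) hK
  have hK1 : 1 ≤ K := one_le_of_card_pow_three_le h1 hK
  calc (#A : ℝ) ^ 3 ≤ 2 * #(H ^ 6) ^ 2 + 3 * #A ^ 2 + 16 * #A * #(H ^ 7) := by
        exact_mod_cast hcount
    _ ≤ 2 * (K ^ 4 * #H) ^ 2 + 3 * (K * #H) ^ 2 + 16 * (K * #H) * (K ^ 5 * #H) := by gcongr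
    _ = (2 * K ^ 8 + 3 * K ^ 2 + 16 * K ^ 6) * #H ^ 2 := by ring
    _ ≤ (2 * K ^ 8 + 3 * K ^ 8 + 16 * K ^ 8) * #H ^ 2 := by gcongr <;> simp
    _ = 21 * K ^ 8 * #H ^ 2 := by ring

theorem card_filter_commute_le {H : Finset SL(2, F)} (h1 : 1 ∈ H) (hgH : g ∈ H)
    (hg : g.1.trace ^ 2 ≠ 4) :
    #{h ∈ H ^ 2 | h * g = g * h} ≤ 3 * #{h ∈ H ^ 2 | h * g = g * h ∧ h.1.trace ^ 2 ≠ 4} := by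
  set T := {h ∈ H ^ 2 | h * g = g * h ∧ h.1.trace ^ 2 ≠ 4}
  have hpos : 0 < #T := Finset.card_pos.2
    ⟨g, Finset.mem_filter.2 ⟨Finset.subset_pow h1 two_ne_zero hgH, rfl, hg⟩⟩
  have hsub : {h ∈ H ^ 2 | h * g = g * h} ⊆ T ∪ {1, -1} := fun h hh => by
    obtain ⟨hH, hgh⟩ := Finset.mem_filter.1 hh
    by_cases hh4 : h.1.trace ^ 2 = 4
    · exact Finset.mem_union_right _ (by simpa using eq_one_or_eq_neg_one_of_commute hg hgh hh4)
    · exact Finset.mem_union_left _ (Finset.mem_filter.2 ⟨hH, hgh, hh4⟩)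
  calc _ ≤ #T + #{1, -1} := (Finset.card_le_card hsub).trans (Finset.card_union_le _ _)
    _ ≤ #T + 2 := by gcongr; exact Finset.card_le_two
    _ ≤ 3 * #T := by lia

theorem card_le_of_small_tripling {H : Finset SL(2, F)} {K : ℝ} (hsym : H⁻¹ = H) (h1 : 1 ∈ H)
    (hfix : ∀ ℓ : ℙ F (Fin 2 → F), ∃ h ∈ H, h • ℓ ≠ ℓ) (hK : #(H ^ 3) ≤ K * #H) (hgH : g ∈ H)
    (hg₀ : g.1.trace ≠ 0) (hg : g.1.trace ^ 2 ≠ 4) :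
    #H ≤ 567 * #{h ∈ H ^ 2 | h * g = g * h ∧ h.1.trace ^ 2 ≠ 4} ^ 3 * K ^ 8 := by
  set A := {b ∈ H ^ 3 | b.1.trace = g.1.trace}
  set T := {h ∈ H ^ 2 | h * g = g * h ∧ h.1.trace ^ 2 ≠ 4}
  have hpos : (0 : ℝ) < #H := by exact_mod_cast Finset.card_pos.2 ⟨1, h1⟩
  have hconj : H.image (fun h => h * g * h⁻¹) ⊆ A := Finset.image_subset_iff.2 fun h hh => by
    refine Finset.mem_filter.2 ⟨?_, ?_⟩
    · rw [pow_three']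
      exact Finset.mul_mem_mul (Finset.mul_mem_mul hh hgH) (hsym ▸ Finset.inv_mem_inv hh)
    · calc (h * g * h⁻¹).1.trace = (h⁻¹ * (h * g)).1.trace := trace_mul_comm _ _
        _ = g.1.trace := by rw [inv_mul_cancel_left]
  have horbit : #H ≤ #A * (3 * #T) :=
    calc #H ≤ _ := card_le_card_image_conj_mul_card_filter_commute H g
      _ ≤ #A * #{h ∈ H ^ 2 | h * g = g * h} := by rw [hsym, ← sq]; gcongr
      _ ≤ #A * (3 * #T) := by gcongr; exact card_filter_commute_le h1 hgH hg
  have hcube : (#H : ℝ) ^ 3 ≤ 567 * #T ^ 3 * K ^ 8 * #H ^ 2 :=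
    calc (#H : ℝ) ^ 3 ≤ (#A * (3 * #T) : ℝ) ^ 3 := by gcongr; exact_mod_cast horbit
      _ = (27 : ℝ) * #T ^ 3 * #A ^ 3 := by ring
      _ ≤ 27 * #T ^ 3 * (21 * K ^ 8 * #H ^ 2) := by
        gcongr
        exact card_filter_trace_eq_pow_three_le hsym h1 hfix hK hg₀ hg
      _ = 567 * #T ^ 3 * K ^ 8 * #H ^ 2 := by ring
  exact le_of_mul_le_mul_right (by linarith) (pow_pos hpos 2)

theorem card_pow_nine_le {H : Finset SL(2, F)} (hsym : H⁻¹ = H) (h1 : 1 ∈ H)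
    (hfix : ∀ ℓ : ℙ F (Fin 2 → F), ∃ h ∈ H, h • ℓ ≠ ℓ) (hgH : g ∈ H) (hg₀ : g.1.trace ≠ 0)
    (hg : g.1.trace ^ 2 ≠ 4) :
    #H ^ 9 ≤ 567 * #{h ∈ H ^ 2 | h * g = g * h ∧ h.1.trace ^ 2 ≠ 4} ^ 3 * #(H ^ 3) ^ 8 := by
  have hpos : (0 : ℝ) < #H := by exact_mod_cast Finset.card_pos.2 ⟨1, h1⟩
  have hK : (#(H ^ 3) : ℝ) = #(H ^ 3) / #H * #H := (div_mul_cancel₀ _ hpos.ne').symm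
  have h := card_le_of_small_tripling hsym h1 hfix hK.le hgH hg₀ hg
  rw [div_pow, ← mul_div_assoc, le_div_iff₀ (pow_pos hpos 8), ← pow_succ'] at h
  exact_mod_cast h

end Counting

end LarsenPink

open LarsenPink in
open scoped LinearAlgebra.Projectivization MatrixGroups Finset in
theorem stmt_14_general {F : Type*} [Field F] [DecidableEq F] (H : Finset SL(2, F))
    (hsym : ∀ h ∈ H, h⁻¹ ∈ H) (hone : 1 ∈ H)
    (hfix : ∀ ℓ : ℙ F (Fin 2 → F), ∃ h ∈ H, h • ℓ ≠ ℓ) (g : SL(2, F)) (hgH : g ∈ H)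
    (hg0 : g.1.trace ≠ 0) (hg4 : g.1.trace ^ 2 ≠ 4) :
    #H ^ 13 ≤ 2744 * #{h ∈ H ^ 2 | h * g = g * h ∧ h.1.trace ^ 2 ≠ 4} ^ 3 * #(H ^ 3) ^ 12 := by
  set N := #{h ∈ H ^ 2 | h * g = g * h ∧ h.1.trace ^ 2 ≠ 4}
  have hinv : H⁻¹ = H := Finset.ext fun h =>
    ⟨fun hh => inv_inv h ▸ hsym _ (Finset.mem_inv'.1 hh), fun hh => Finset.mem_inv'.2 (hsym h hh)⟩
  have hH : H ⊆ H ^ 3 := Finset.subset_pow hone three_ne_zero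
  calc #H ^ 13 = #H ^ 9 * #H ^ 4 := by ring
    _ ≤ 567 * N ^ 3 * #(H ^ 3) ^ 8 * #(H ^ 3) ^ 4 := by
      gcongr
      exact card_pow_nine_le hinv hone hfix hgH hg0 hg4
    _ = 567 * N ^ 3 * #(H ^ 3) ^ 12 := by ring
    _ ≤ 2744 * N ^ 3 * #(H ^ 3) ^ 12 := by gcongr; norm_num

/-- **Key dichotomy for involved tori (Proposition `pr-dichotomy`(2)).**
Let `p ≥ 3` be prime, `H` a symmetric generating set of `SL₂(𝔽_p)` containing `1`, and
`g ∈ H` with `tr(g) ≠ 0` and `tr(g)² ≠ 4`. Let `N` be the number of regular semisimple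
elements of `H^(2)` commuting with `g` (i.e. lying in the maximal torus through `g`).
Then `2744·N³·|H^(3)|¹² ≥ |H|¹³`, unless `|H^(3)|^168 ≥ |H|^169`. -/
theorem stmt_14 (p : ℕ) (hp : p.Prime) (hp3 : 3 ≤ p)
    (H : Finset (Matrix.SpecialLinearGroup (Fin 2) (ZMod p)))
    (hsym : ∀ h ∈ H, h⁻¹ ∈ H)
    (hone : (1 : Matrix.SpecialLinearGroup (Fin 2) (ZMod p)) ∈ H)
    (hgen : Subgroup.closure (H : Set (Matrix.SpecialLinearGroup (Fin 2) (ZMod p))) = ⊤)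
    (g : Matrix.SpecialLinearGroup (Fin 2) (ZMod p)) (hgH : g ∈ H)
    (hg0 : Matrix.trace (g : Matrix (Fin 2) (Fin 2) (ZMod p)) ≠ 0)
    (hg4 : Matrix.trace (g : Matrix (Fin 2) (Fin 2) (ZMod p)) ^ 2 ≠ 4)
    (N : ℕ)
    (hN : N = ((H ^ 2 : Finset (Matrix.SpecialLinearGroup (Fin 2) (ZMod p))).filter
      fun h : Matrix.SpecialLinearGroup (Fin 2) (ZMod p) =>
        h * g = g * h ∧ Matrix.trace (↑h : Matrix (Fin 2) (Fin 2) (ZMod p)) ^ 2 ≠ 4).card) :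
    H.card ^ 13 ≤
        2744 * N ^ 3 * (H ^ 3 : Finset (Matrix.SpecialLinearGroup (Fin 2) (ZMod p))).card ^ 12 ∨
      H.card ^ 169 ≤ (H ^ 3 : Finset (Matrix.SpecialLinearGroup (Fin 2) (ZMod p))).card ^ 168 := by
  have := Fact.mk hp
  exact .inl (hN ▸ stmt_14_general H hsym hone
    (LarsenPink.exists_smul_ne_of_closure_eq_top hgen) g hgH hg0 hg4)
end

section
/- Let p ≥ 3 be a prime, let k be an algebraic closure of 𝔽_p, and let ι : SL₂(𝔽_p) → SL₂(k) be the embedding induced by the inclusion 𝔽_p ↪ k. For γ ∈ k^×, let C_γ = {[[γ,t],[0,γ⁻¹]] : t ∈ k} ⊆ SL₂(k). Then for any γ ∈ k^×, any x ∈ SL₂(k), and any symmetric generating set H of SL₂(𝔽_p) containing the identity, |{h ∈ H : ι(h) ∈ x·C_γ·x⁻¹}|³ · |H|⁵ ≤ 8 · |H^(3)|⁶ (equivalently, |{h ∈ H : ι(h) ∈ x·C_γ·x⁻¹}| ≤ 2·α²·|H|^(1/3) where α = |H^(3)|/|H|). -/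
open Pointwise

/-!
Call `B` the subgroup of upper triangular matrices and let `A = H ∩ C_γ`, after conjugating by `x`.
Since `H` generates, it contains some `h ∉ B`, and the lower left entry of `h v h` is then an
injective function of `v ∈ C_γ`; in particular `h v h ∉ B` for all but at most one `v`.
Multiplication on both sides by elements of `C_γ` preserves the lower left entry, so `v` can be
recovered from `u (h v h) w`, after which the lower right entry gives `w`. Hence `H ^ 5` has at
least `|A| ^ 2 * (|A| - 1)` elements, and `|H ^ 5|` is controlled by the tripling constant.
-/

section

open Matrix Finset
open scoped MatrixGroups

theorem card_pow_add_three_mul_card_pow_le {G : Type*} [Group G] [DecidableEq G] {A : Finset G}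
    (hA : A⁻¹ = A) (m : ℕ) : #(A ^ (m + 3)) * #A ^ m ≤ #(A ^ 3) ^ (m + 1) := by
  obtain rfl | hne := A.eq_empty_or_nonempty
  · simp
  have hpos : (0 : ℝ) < #A := mod_cast hne.card_pos
  have hsmall : (#(A ^ (m + 3)) : ℝ) ≤ (#(A ^ 3) / #A : ℝ) ^ (m + 1) * #A :=
    small_pow_of_small_tripling (by omega) (div_mul_cancel₀ _ hpos.ne').ge hA
  have hreal : (#(A ^ (m + 3)) : ℝ) * #A ^ m ≤ #(A ^ 3) ^ (m + 1) :=
    calc (#(A ^ (m + 3)) : ℝ) * #A ^ m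
        ≤ (#(A ^ 3) / #A : ℝ) ^ (m + 1) * #A * #A ^ m := by gcongr
      _ = #(A ^ 3) ^ (m + 1) := by
        rw [mul_assoc, ← pow_succ', ← mul_pow, div_mul_cancel₀ _ hpos.ne']
  exact_mod_cast hreal

theorem specialLinearGroup_map_injective {n R S : Type*} [Fintype n] [DecidableEq n]
    [CommRing R] [CommRing S] {f : R →+* S} (hf : Function.Injective f) :
    Function.Injective (Matrix.SpecialLinearGroup.map (n := n) f) :=
  fun _ _ h ↦ Subtype.ext (Matrix.map_injective hf (congrArg Subtype.val h))

section CommRing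

variable {K : Type*} [CommRing K]

theorem SL2_mul_apply (g h : SL(2, K)) (i j : Fin 2) :
    (g * h) i j = g i 0 * h 0 j + g i 1 * h 1 j := by
  rw [Matrix.SpecialLinearGroup.coe_mul, Matrix.mul_apply, Fin.sum_univ_two]

theorem inv_mul_mul_apply_one_zero (x g : SL(2, K)) :
    (x⁻¹ * g * x) 1 0 =
      x 0 0 ^ 2 * g 1 0 + x 0 0 * x 1 0 * (g 1 1 - g 0 0) - x 1 0 ^ 2 * g 0 1 := by
  simp only [SL2_mul_apply, Matrix.SpecialLinearGroup.coe_inv, adjugate_fin_two, of_apply,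
    cons_val', cons_val_zero, cons_val_one, cons_val_fin_one]
  ring

variable (K) in
/-- The Borel subgroup of upper triangular matrices in `SL₂(K)`, encoded by the vanishing of the
lower left entry. -/
def upperTriangularSubgroup : Subgroup SL(2, K) where
  carrier := {g | g 1 0 = 0}
  one_mem' := by simp
  mul_mem' {g h} hg hh := by
    simp only [Set.mem_ofPred_eq] at hg hh ⊢
    simp [SL2_mul_apply, hg, hh]
  inv_mem' {g} hg := by
    simp only [Set.mem_ofPred_eq] at hg ⊢
    simp [adjugate_fin_two, hg]

theorem mem_upperTriangularSubgroup {g : SL(2, K)} :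
    g ∈ upperTriangularSubgroup K ↔ g 1 0 = 0 := Iff.rfl

/-- The element of `SL₂(K)` with rows `(γ, t)` and `(0, γ⁻¹)`. -/
def upperTriangularMk (γ : Kˣ) (t : K) : SL(2, K) :=
  ⟨!![(γ : K), t; 0, ↑γ⁻¹], by simp [det_fin_two_of]⟩

@[simp]
theorem coe_upperTriangularMk (γ : Kˣ) (t : K) :
    (upperTriangularMk γ t : Matrix (Fin 2) (Fin 2) K) = !![(γ : K), t; 0, ↑γ⁻¹] := rfl

/-- The coset `C_γ` of the upper unipotent subgroup of `SL₂(K)`. Taking `γ` to be a unit ensures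
that its inverse is a genuine one. -/
def unipotentCoset (γ : Kˣ) : Set SL(2, K) := Set.range (upperTriangularMk γ)

theorem mem_conj_smul_unipotentCoset {γ : Kˣ} {x g : SL(2, K)} :
    g ∈ MulAut.conj x • unipotentCoset γ ↔
      ∃ t, (g : Matrix (Fin 2) (Fin 2) K) =
        x * !![(γ : K), t; 0, ↑γ⁻¹] * (x⁻¹ : SL(2, K)) := by
  simp only [unipotentCoset, Set.mem_smul_set, Set.exists_range_iff, MulAut.smul_def,
    MulAut.conj_apply]
  exact exists_congr fun t ↦ eq_comm.trans Subtype.ext_iff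

theorem mul_mul_apply_one_zero_of_mem_unipotentCoset {γ : Kˣ} {u w : SL(2, K)}
    (hu : u ∈ unipotentCoset γ) (hw : w ∈ unipotentCoset γ) (g : SL(2, K)) :
    (u * g * w) 1 0 = g 1 0 := by
  obtain ⟨s, rfl⟩ := hu
  obtain ⟨t, rfl⟩ := hw
  simp [SL2_mul_apply, mul_right_comm]

variable [IsDomain K]

theorem injOn_mul_mul_apply_one_zero_unipotentCoset {γ : Kˣ} {h : SL(2, K)}
    (hh : h ∉ upperTriangularSubgroup K) :
    Set.InjOn (fun v : SL(2, K) ↦ (h * v * h) 1 0) (unipotentCoset γ) := by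
  rintro _ ⟨s, rfl⟩ _ ⟨t, rfl⟩ hst
  have hst : h 1 0 * h 1 0 * s = h 1 0 * h 1 0 * t := by
    simp only [SL2_mul_apply, coe_upperTriangularMk, of_apply, cons_val', cons_val_zero,
      cons_val_one, cons_val_fin_one] at hst
    linear_combination hst
  rw [mul_left_cancel₀ (mul_self_ne_zero.2 hh) hst]

theorem right_eq_of_mul_mul_eq_of_mem_unipotentCoset {γ : Kˣ} {u u' w w' g : SL(2, K)}
    (hu : u ∈ unipotentCoset γ) (hu' : u' ∈ unipotentCoset γ)
    (hw : w ∈ unipotentCoset γ) (hw' : w' ∈ unipotentCoset γ)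
    (hg : g ∉ upperTriangularSubgroup K) (h : u * g * w = u' * g * w') : w = w' := by
  obtain ⟨r, rfl⟩ := hu
  obtain ⟨r', rfl⟩ := hu'
  obtain ⟨s, rfl⟩ := hw
  obtain ⟨t, rfl⟩ := hw'
  have h_entry := congrArg (fun m : SL(2, K) ↦ m 1 1) h
  have hst : ↑γ⁻¹ * g 1 0 * s = ↑γ⁻¹ * g 1 0 * t := by
    simpa [SL2_mul_apply] using h_entry
  rw [mul_left_cancel₀ (mul_ne_zero γ⁻¹.ne_zero hg) hst]

theorem injOn_mul_mul_mul_mul_unipotentCoset {γ : Kˣ} {h : SL(2, K)}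
    (hh : h ∉ upperTriangularSubgroup K) :
    Set.InjOn (fun q : SL(2, K) × SL(2, K) × SL(2, K) ↦ q.1 * (h * q.2.1 * h) * q.2.2)
      (unipotentCoset γ ×ˢ
        {v ∈ unipotentCoset γ | h * v * h ∉ upperTriangularSubgroup K} ×ˢ unipotentCoset γ) := by
  rintro ⟨u, v, w⟩ ⟨hu, ⟨hv, hhv⟩, hw⟩ ⟨u', v', w'⟩ ⟨hu', ⟨hv', -⟩, hw'⟩ heq
  dsimp only at hu hv hw hu' hv' hw' heq
  obtain rfl : v = v' := by
    refine injOn_mul_mul_apply_one_zero_unipotentCoset hh hv hv' ?_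
    dsimp only
    rw [← mul_mul_apply_one_zero_of_mem_unipotentCoset hu hw, heq,
      mul_mul_apply_one_zero_of_mem_unipotentCoset hu' hw']
  obtain rfl : w = w' :=
    right_eq_of_mul_mul_eq_of_mem_unipotentCoset hu hu' hw hw' hhv heq
  obtain rfl : u = u' := mul_right_cancel (mul_right_cancel heq)
  rfl

section Counting

variable [DecidableEq K] {γ : Kˣ} {A H : Finset SL(2, K)} {h : SL(2, K)}

theorem card_le_card_filter_mul_mul_add_one (hA : (A : Set SL(2, K)) ⊆ unipotentCoset γ)
    (hh : h ∉ upperTriangularSubgroup K) : #A ≤ #{v ∈ A | (h * v * h) 1 0 ≠ 0} + 1 := by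
  have h_exceptional : #{v ∈ A | ¬ (h * v * h) 1 0 ≠ 0} ≤ 1 := by
    refine card_le_one.2 fun v hv w hw ↦ ?_
    simp only [mem_filter, not_not] at hv hw
    exact injOn_mul_mul_apply_one_zero_unipotentCoset hh (hA hv.1) (hA hw.1) (hv.2.trans hw.2.symm)
  rw [← card_filter_add_card_filter_not (s := A) (fun v ↦ (h * v * h) 1 0 ≠ 0)]
  gcongr

theorem card_mul_card_filter_mul_card_le_card_pow_five (hAH : A ⊆ H)
    (hA : (A : Set SL(2, K)) ⊆ unipotentCoset γ) (hhH : h ∈ H)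
    (hh : h ∉ upperTriangularSubgroup K) :
    #A * (#{v ∈ A | (h * v * h) 1 0 ≠ 0} * #A) ≤ #(H ^ 5) := by
  rw [← card_product, ← card_product]
  refine card_le_card_of_injOn (fun q ↦ q.1 * (h * q.2.1 * h) * q.2.2) ?_
    ((injOn_mul_mul_mul_mul_unipotentCoset (γ := γ) hh).mono ?_)
  · rintro ⟨u, v, w⟩ hq
    simp only [mem_coe, mem_product, mem_filter] at hq
    obtain ⟨hu, ⟨hv, -⟩, hw⟩ := hq
    have hpow : H ^ 5 = H * (H * H * H) * H := by
      simp only [pow_succ, pow_zero, one_mul, mul_assoc]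
    rw [mem_coe, hpow]
    exact mul_mem_mul (mul_mem_mul (hAH hu)
      (mul_mem_mul (mul_mem_mul hhH (hAH hv)) hhH)) (hAH hw)
  · rintro ⟨u, v, w⟩ hq
    simp only [mem_coe, mem_product, mem_filter] at hq
    exact ⟨hA hq.1, ⟨hA hq.2.1.1, hq.2.1.2⟩, hA hq.2.2⟩

theorem card_pow_three_le_two_mul_card_pow_five (hAH : A ⊆ H)
    (hA : (A : Set SL(2, K)) ⊆ unipotentCoset γ) (hH : ∃ h ∈ H, h ∉ upperTriangularSubgroup K) :
    #A ^ 3 ≤ 2 * #(H ^ 5) := by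
  obtain ⟨h, hhH, hh⟩ := hH
  obtain hle | hlt := le_or_gt #A 1
  · have hpos : 0 < #(H ^ 5) := card_pos.2 (Nonempty.pow ⟨h, hhH⟩)
    calc #A ^ 3 ≤ 1 ^ 3 := by gcongr
      _ ≤ 2 * #(H ^ 5) := by omega
  · have hgood := card_le_card_filter_mul_mul_add_one hA hh
    calc #A ^ 3 = #A * (#A * #A) := by ring
      _ ≤ #A * ((2 * #{v ∈ A | (h * v * h) 1 0 ≠ 0}) * #A) := by gcongr; omega
      _ = 2 * (#A * (#{v ∈ A | (h * v * h) 1 0 ≠ 0} * #A)) := by ring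
      _ ≤ 2 * #(H ^ 5) := by
        gcongr
        exact card_mul_card_filter_mul_card_le_card_pow_five hAH hA hhH hh

theorem card_pow_three_mul_card_pow_five_le_of_subset_unipotentCoset (hAH : A ⊆ H)
    (hA : (A : Set SL(2, K)) ⊆ unipotentCoset γ) (hsym : H⁻¹ = H)
    (hH : ∃ h ∈ H, h ∉ upperTriangularSubgroup K) :
    #A ^ 3 * #H ^ 5 ≤ 2 * #(H ^ 3) ^ 6 :=
  calc #A ^ 3 * #H ^ 5 ≤ 2 * #(H ^ 5) * #H ^ 5 := by
        gcongr
        exact card_pow_three_le_two_mul_card_pow_five hAH hA hH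
    _ = 2 * (#(H ^ 5) * #H ^ 2) * #H ^ 3 := by ring
    _ ≤ 2 * #(H ^ 3) ^ 3 * #(H ^ 3) ^ 3 := by
        gcongr 2 * ?_ * ?_ ^ 3
        · exact card_pow_add_three_mul_card_pow_le hsym 2
        · exact card_le_card_pow three_ne_zero
    _ = 2 * #(H ^ 3) ^ 6 := by ring

end Counting

theorem exists_conj_map_notMem_upperTriangularSubgroup {R : Type*} [CommRing R] (f : R →+* K)
    (x : SL(2, K)) :
    ∃ g : SL(2, R), x⁻¹ * Matrix.SpecialLinearGroup.map f g * x ∉ upperTriangularSubgroup K := by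
  by_contra! hall
  have hquad (g : SL(2, R)) : x 0 0 ^ 2 * f (g 1 0) + x 0 0 * x 1 0 * (f (g 1 1) - f (g 0 0))
      - x 1 0 ^ 2 * f (g 0 1) = 0 :=
    (inv_mul_mul_apply_one_zero x _).symm.trans (hall g)
  have h10 : x 1 0 = 0 := by simpa using hquad (upperTriangularMk 1 1)
  have h00 : x 0 0 = 0 := by simpa using hquad (upperTriangularMk 1 1).transpose
  have hdet : x 0 0 * x 1 1 - x 0 1 * x 1 0 = 1 := (det_fin_two _).symm.trans x.det_coe
  simp [h00, h10] at hdet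

theorem exists_mem_conj_map_notMem_upperTriangularSubgroup {R : Type*} [CommRing R]
    {s : Set SL(2, R)} (hs : Subgroup.closure s = ⊤) (f : R →+* K) (x : SL(2, K)) :
    ∃ h ∈ s, x⁻¹ * Matrix.SpecialLinearGroup.map f h * x ∉ upperTriangularSubgroup K := by
  by_contra! hall
  obtain ⟨g, hg⟩ := exists_conj_map_notMem_upperTriangularSubgroup f x
  have hle : Subgroup.closure s ≤ (upperTriangularSubgroup K).comap
      ((MulAut.conj x)⁻¹.toMonoidHom.comp (Matrix.SpecialLinearGroup.map f)) :=
    (Subgroup.closure_le _).2 hall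
  exact hg (hle (hs ▸ Subgroup.mem_top g))

theorem stmt_16_general {R : Type*} [CommRing R] [DecidableEq R] {f : R →+* K}
    (hf : Function.Injective f) (γ : Kˣ) (x : SL(2, K)) (H : Finset SL(2, R))
    (hsym : ∀ h ∈ H, h⁻¹ ∈ H) (hgen : Subgroup.closure (H : Set SL(2, R)) = ⊤) :
    {h | h ∈ H ∧ Matrix.SpecialLinearGroup.map f h ∈ MulAut.conj x • unipotentCoset γ}.ncard ^ 3 *
      #H ^ 5 ≤ 2 * #(H ^ 3) ^ 6 := by
  classical
  let φ : SL(2, R) →* SL(2, K) :=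
    (MulAut.conj x)⁻¹.toMonoidHom.comp (Matrix.SpecialLinearGroup.map f)
  have hφ : Function.Injective φ :=
    (MulAut.conj x)⁻¹.injective.comp (specialLinearGroup_map_injective hf)
  have hsym' : H⁻¹ = H :=
    Finset.ext fun g ↦ mem_inv'.trans ⟨fun hg ↦ inv_inv g ▸ hsym _ hg, hsym g⟩
  obtain ⟨h, hhH, hh⟩ := exists_mem_conj_map_notMem_upperTriangularSubgroup hgen f x
  let A : Finset SL(2, R) := {h ∈ H | φ h ∈ unipotentCoset γ}
  have hA :
      {h | h ∈ H ∧ Matrix.SpecialLinearGroup.map f h ∈ MulAut.conj x • unipotentCoset γ} = A := by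
    ext g
    simp only [A, coe_filter, Set.mem_ofPred_eq, Set.mem_smul_set_iff_inv_smul_mem]
    rfl
  have hAH : A.image φ ⊆ H.image φ := image_subset_image (filter_subset _ _)
  have hAγ : (A.image φ : Set SL(2, K)) ⊆ unipotentCoset γ := by
    rw [coe_image, Set.image_subset_iff]
    exact fun g hg ↦ (mem_filter.1 hg).2
  have hcard := card_pow_three_mul_card_pow_five_le_of_subset_unipotentCoset hAH hAγ
    (by rw [← image_inv, hsym']) ⟨φ h, mem_image_of_mem φ hhH, hh⟩
  rwa [← image_pow, card_image_of_injective _ hφ, card_image_of_injective _ hφ,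
    card_image_of_injective _ hφ, ← Set.ncard_coe_finset, ← hA] at hcard

end CommRing

end

/-- **Non-concentration in unipotent cosets (Lemma `lm-subkey`).** Let `p ≥ 3` be prime,
`k` an algebraic closure of `𝔽_p`, `ι : SL₂(𝔽_p) → SL₂(k)` the natural embedding, and for
`γ ∈ k^×` let `C_γ = {[[γ,t],[0,γ⁻¹]] : t ∈ k}`. Then for any `γ ≠ 0`, any `x ∈ SL₂(k)`
and any symmetric generating set `H` of `SL₂(𝔽_p)` containing `1`,
`|{h ∈ H : ι(h) ∈ x·C_γ·x⁻¹}|³ · |H|⁵ ≤ 8·|H^(3)|⁶`. -/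
theorem stmt_16 (p : ℕ) [Fact p.Prime] (hp3 : 3 ≤ p)
    (γ : AlgebraicClosure (ZMod p)) (hγ : γ ≠ 0)
    (x : Matrix.SpecialLinearGroup (Fin 2) (AlgebraicClosure (ZMod p)))
    (H : Finset (Matrix.SpecialLinearGroup (Fin 2) (ZMod p)))
    (hsym : ∀ h ∈ H, h⁻¹ ∈ H)
    (hone : (1 : Matrix.SpecialLinearGroup (Fin 2) (ZMod p)) ∈ H)
    (hgen : Subgroup.closure (H : Set (Matrix.SpecialLinearGroup (Fin 2) (ZMod p))) = ⊤) :
    {h : Matrix.SpecialLinearGroup (Fin 2) (ZMod p) | h ∈ H ∧ ∃ t : AlgebraicClosure (ZMod p),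
        ((Matrix.SpecialLinearGroup.map
            (algebraMap (ZMod p) (AlgebraicClosure (ZMod p))) h :
              Matrix.SpecialLinearGroup (Fin 2) (AlgebraicClosure (ZMod p))) :
            Matrix (Fin 2) (Fin 2) (AlgebraicClosure (ZMod p))) =
          (x : Matrix (Fin 2) (Fin 2) (AlgebraicClosure (ZMod p))) * !![γ, t; 0, γ⁻¹] *
            ((x⁻¹ : Matrix.SpecialLinearGroup (Fin 2) (AlgebraicClosure (ZMod p))) :
              Matrix (Fin 2) (Fin 2) (AlgebraicClosure (ZMod p)))}.ncard ^ 3 * H.card ^ 5 ≤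
      8 * (H ^ 3 : Finset (Matrix.SpecialLinearGroup (Fin 2) (ZMod p))).card ^ 6 := by
  obtain ⟨γ, rfl⟩ := hγ.isUnit
  simp only [← Units.val_inv_eq_inv_val, ← mem_conj_smul_unipotentCoset]
  exact (stmt_16_general (FaithfulSMul.algebraMap_injective _ _) γ x H hsym hgen).trans
    (Nat.mul_le_mul_right _ (by norm_num))
end

section
/- Let S ⊂ SL₂(ℤ) be a finite symmetric set which freely generates a free subgroup of rank |S|/2, and let Δ = max_{s∈S} ‖s‖. Let p be a prime and let s₁, …, s_m ∈ S (m ≥ 1) be a reduced word, i.e. s_{i+1}·s_i ≠ 1 for 1 ≤ i < m. If s₁⋯s_m ≡ 1 (mod p), i.e. the product reduces to the identity in SL₂(𝔽_p), then Δ^⌈m/2⌉ ≥ p/2. In particular the Cayley graph of SL₂(𝔽_p) with respect to S mod p contains no cycle of length m unless Δ^⌈m/2⌉ ≥ p/2. -/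
open Pointwise

/-- The ℓ² operator norm of an integer matrix in `SL₂(ℤ)`, i.e. the norm of the induced
linear operator on Euclidean `ℝ²`. -/
noncomputable def sl2zOpNorm (g : Matrix.SpecialLinearGroup (Fin 2) ℤ) : ℝ :=
  ‖Matrix.toEuclideanCLM (𝕜 := ℝ)
    ((g : Matrix (Fin 2) (Fin 2) ℤ).map (Int.cast : ℤ → ℝ))‖

/-!
Split a word of length `m` into halves, `s₁⋯s_m = gh`, so that `g ≡ h⁻¹` modulo `n`, although
`g ≠ h⁻¹` by freeness. The integer matrix `g - h⁻¹` has a nonzero entry divisible by `n`, so its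
norm is at least `n`; on the other hand its norm is at most `‖g‖ + ‖h⁻¹‖ ≤ 2 Δ^⌈m/2⌉`, because
inversion preserves the `ℓ²` operator norm on `SL₂(ℝ)`.
-/

section NormedRing

variable {R : Type*} [SeminormedRing R] [NormOneClass R]

lemma norm_list_prod_le_pow_length {l : List R} {C : ℝ} (hl : ∀ x ∈ l, ‖x‖ ≤ C) :
    ‖l.prod‖ ≤ C ^ l.length := by
  induction l with
  | nil => simp
  | cons a t ih =>
    have ha : ‖a‖ ≤ C := hl a List.mem_cons_self
    have ht : ‖t.prod‖ ≤ C ^ t.length := ih fun x hx ↦ hl x (List.mem_cons_of_mem a hx)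
    calc ‖(a :: t).prod‖ ≤ ‖a‖ * ‖t.prod‖ := by rw [List.prod_cons]; exact norm_mul_le _ _
      _ ≤ C * C ^ t.length := mul_le_mul ha ht (norm_nonneg _) ((norm_nonneg a).trans ha)
      _ = C ^ (a :: t).length := by rw [List.length_cons, pow_succ']

end NormedRing

section L2OpNorm

open scoped Matrix.Norms.L2Operator

variable {m n 𝕜 : Type*} [Fintype m] [Fintype n] [DecidableEq n] [RCLike 𝕜]

lemma norm_entry_le_l2_opNorm (A : Matrix m n 𝕜) (i : m) (j : n) : ‖A i j‖ ≤ ‖A‖ :=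
  calc ‖A i j‖ = ‖(WithLp.toLp 2 (A.mulVec (Pi.single j 1)) : EuclideanSpace 𝕜 m) i‖ := by
        simp only [Matrix.mulVec_single_one, Matrix.col_apply]
    _ ≤ ‖(WithLp.toLp 2 (A.mulVec (Pi.single j 1)) : EuclideanSpace 𝕜 m)‖ :=
        PiLp.norm_apply_le _ i
    _ ≤ ‖A‖ * ‖EuclideanSpace.single j (1 : 𝕜)‖ :=
        A.l2_opNorm_mulVec (EuclideanSpace.single j 1)
    _ = ‖A‖ := by simp only [PiLp.norm_single, norm_one, mul_one]

lemma natCast_le_l2_opNorm_of_dvd {A : Matrix m n ℤ} (hA : A ≠ 0) {k : ℕ}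
    (hk : ∀ i j, (k : ℤ) ∣ A i j) : (k : ℝ) ≤ ‖A.map (Int.cast : ℤ → 𝕜)‖ := by
  obtain ⟨i, j, hij⟩ : ∃ i j, A i j ≠ 0 := by
    contrapose! hA
    exact Matrix.ext hA
  have hle : (k : ℤ) ≤ |A i j| := Int.le_of_dvd (abs_pos.mpr hij) ((dvd_abs _ _).mpr (hk i j))
  calc (k : ℝ) ≤ ((|A i j| : ℤ) : ℝ) := mod_cast hle
    _ = ‖((A i j : ℝ) : 𝕜)‖ := by rw [RCLike.norm_ofReal, Int.cast_abs]
    _ = ‖A.map (Int.cast : ℤ → 𝕜) i j‖ := by rw [RCLike.ofReal_intCast, Matrix.map_apply]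
    _ ≤ ‖A.map (Int.cast : ℤ → 𝕜)‖ := norm_entry_le_l2_opNorm _ i j

lemma natCast_le_l2_opNorm_add_of_map_eq {A B : Matrix m n ℤ} (hne : A ≠ B) {k : ℕ}
    (hmod : A.map (Int.cast : ℤ → ZMod k) = B.map Int.cast) :
    (k : ℝ) ≤ ‖A.map (Int.cast : ℤ → 𝕜)‖ + ‖B.map (Int.cast : ℤ → 𝕜)‖ := by
  have hdvd (i j) : (k : ℤ) ∣ (A - B) i j :=
    (ZMod.intCast_eq_intCast_iff_dvd_sub _ _ k).mp (congrFun₂ hmod i j).symm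
  calc (k : ℝ) ≤ ‖(A - B).map (Int.cast : ℤ → 𝕜)‖ :=
        natCast_le_l2_opNorm_of_dvd (sub_ne_zero.mpr hne) hdvd
    _ = ‖A.map (Int.cast : ℤ → 𝕜) - B.map Int.cast‖ := by rw [Matrix.map_sub _ Int.cast_sub]
    _ ≤ ‖A.map (Int.cast : ℤ → 𝕜)‖ + ‖B.map (Int.cast : ℤ → 𝕜)‖ := norm_sub_le _ _

-- The adjugate of a `2 × 2` matrix `A` is `J Aᵀ J⁻¹`, where `J` is the rotation by a right angle.
lemma l2_opNorm_adjugate_fin_two (A : Matrix (Fin 2) (Fin 2) ℝ) : ‖A.adjugate‖ = ‖A‖ := by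
  let J : Matrix (Fin 2) (Fin 2) ℝ := !![0, 1; -1, 0]
  have hJ : J ∈ unitary (Matrix (Fin 2) (Fin 2) ℝ) := by
    rw [Matrix.mem_unitaryGroup_iff]
    ext i j
    fin_cases i <;> fin_cases j <;> simp [J, Matrix.star_eq_conjTranspose, Matrix.mul_apply]
  have hadj : A.adjugate = J * A.conjTranspose * star J := by
    rw [Matrix.adjugate_fin_two]
    ext i j
    fin_cases i <;> fin_cases j <;>
      simp [J, Matrix.star_eq_conjTranspose, Matrix.mul_apply, Matrix.vecMul, dotProduct]
  rw [hadj, CStarRing.norm_mul_mem_unitary _ (Unitary.star_mem hJ),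
    CStarRing.norm_mem_unitary_mul _ hJ, Matrix.l2_opNorm_conjTranspose]

end L2OpNorm

section SL2

open Matrix MatrixGroups
open scoped Matrix.Norms.L2Operator

lemma sl2zOpNorm_eq_norm_map (g : SL(2, ℤ)) :
    sl2zOpNorm g = ‖(g : Matrix (Fin 2) (Fin 2) ℤ).map (Int.cast : ℤ → ℝ)‖ :=
  (cstar_norm_def _).symm

lemma sl2zOpNorm_inv (g : SL(2, ℤ)) : sl2zOpNorm g⁻¹ = sl2zOpNorm g := by
  have hadj : ((g⁻¹ : SL(2, ℤ)) : Matrix (Fin 2) (Fin 2) ℤ).map (Int.cast : ℤ → ℝ) =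
      ((g : Matrix (Fin 2) (Fin 2) ℤ).map Int.cast).adjugate :=
    (congrArg _ g.coe_inv).trans ((Int.castRingHom ℝ).map_adjugate _)
  rw [sl2zOpNorm_eq_norm_map, sl2zOpNorm_eq_norm_map, hadj, l2_opNorm_adjugate_fin_two]

lemma one_le_sl2zOpNorm (g : SL(2, ℤ)) : 1 ≤ sl2zOpNorm g := by
  have hg : (g : Matrix (Fin 2) (Fin 2) ℤ) ≠ 0 := fun h ↦ by simpa [h] using g.det_coe
  have h := natCast_le_l2_opNorm_of_dvd (𝕜 := ℝ) (k := 1) hg fun i j ↦ by simp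
  rwa [Nat.cast_one, ← sl2zOpNorm_eq_norm_map] at h

lemma sl2zOpNorm_list_prod_le_pow_length {l : List SL(2, ℤ)} {D : ℝ}
    (hl : ∀ x ∈ l, sl2zOpNorm x ≤ D) : sl2zOpNorm l.prod ≤ D ^ l.length := by
  let toReal : SL(2, ℤ) →* Matrix (Fin 2) (Fin 2) ℝ :=
    SpecialLinearGroup.coeMonoidHom.comp (SpecialLinearGroup.map (Int.castRingHom ℝ))
  have hnorm (g : SL(2, ℤ)) : sl2zOpNorm g = ‖toReal g‖ := sl2zOpNorm_eq_norm_map g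
  rw [hnorm, map_list_prod, ← l.length_map toReal]
  refine norm_list_prod_le_pow_length fun x hx ↦ ?_
  obtain ⟨g, hg, rfl⟩ := List.mem_map.mp hx
  exact (hnorm g).symm.trans_le (hl g hg)

lemma natCast_le_sl2zOpNorm_add_of_map_mul_eq_one {g h : SL(2, ℤ)} (hne : g * h ≠ 1) {n : ℕ}
    (hmod : SpecialLinearGroup.map (Int.castRingHom (ZMod n)) (g * h) = 1) :
    (n : ℝ) ≤ sl2zOpNorm g + sl2zOpNorm h := by
  have hmap : SpecialLinearGroup.map (Int.castRingHom (ZMod n)) g =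
      SpecialLinearGroup.map (Int.castRingHom (ZMod n)) h⁻¹ := by
    rw [map_mul] at hmod
    rw [map_inv, eq_inv_of_mul_eq_one_left hmod]
  have hgh : (g : Matrix (Fin 2) (Fin 2) ℤ) ≠ (h⁻¹ : SL(2, ℤ)) := fun heq ↦
    hne (mul_eq_one_iff_eq_inv.mpr (Subtype.ext heq))
  rw [← sl2zOpNorm_inv h, sl2zOpNorm_eq_norm_map, sl2zOpNorm_eq_norm_map]
  exact natCast_le_l2_opNorm_add_of_map_eq hgh (congrArg Subtype.val hmap)

theorem stmt_17_general {l : List SL(2, ℤ)} (hprod : l.prod ≠ 1) {n : ℕ}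
    (hmod : SpecialLinearGroup.map (Int.castRingHom (ZMod n)) l.prod = 1) {D : ℝ}
    (hD : ∀ x ∈ l, sl2zOpNorm x ≤ D) : (n : ℝ) / 2 ≤ D ^ ((l.length + 1) / 2) := by
  set k := (l.length + 1) / 2 with hk
  have one_le_D : 1 ≤ D := by
    obtain ⟨x, hx⟩ := List.exists_mem_of_ne_nil l fun hl ↦ hprod (by rw [hl, List.prod_nil])
    exact (one_le_sl2zOpNorm x).trans (hD x hx)
  have opNorm_prod_le {t : List SL(2, ℤ)} (ht : t ⊆ l) (hlen : t.length ≤ k) :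
      sl2zOpNorm t.prod ≤ D ^ k :=
    (sl2zOpNorm_list_prod_le_pow_length fun x hx ↦ hD x (ht hx)).trans
      (pow_le_pow_right₀ one_le_D hlen)
  have hfst : sl2zOpNorm (l.take k).prod ≤ D ^ k :=
    opNorm_prod_le (List.take_subset k l) (List.length_take_le k l)
  have hsnd : sl2zOpNorm (l.drop k).prod ≤ D ^ k :=
    opNorm_prod_le (List.drop_subset k l) (by rw [List.length_drop]; omega)
  rw [← List.prod_take_mul_prod_drop l k] at hprod hmod
  linarith [natCast_le_sl2zOpNorm_add_of_map_mul_eq_one hprod hmod]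

end SL2

/-- **Large girth of the Cayley graphs mod `p` (Proposition `pr-girth`).** Let `S ⊆ SL₂(ℤ)`
be a finite symmetric set freely generating a free group of rank `|S|/2` (i.e. no nonempty
reduced word in `S` equals `1`), and `Δ = max_{s ∈ S} ‖s‖`. If a reduced word `s₁⋯s_m`
(`m ≥ 1`) in `S` reduces to the identity in `SL₂(𝔽_p)`, then `Δ^⌈m/2⌉ ≥ p/2`; in particular
the Cayley graph of `SL₂(𝔽_p)` with respect to `S mod p` has no cycle of length `m` unless
`Δ^⌈m/2⌉ ≥ p/2`. -/
theorem stmt_17 (S : Finset (Matrix.SpecialLinearGroup (Fin 2) ℤ))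
    (hsym : ∀ s ∈ S, s⁻¹ ∈ S)
    (hfree : ∀ l : List (Matrix.SpecialLinearGroup (Fin 2) ℤ),
      l ≠ [] → (∀ x ∈ l, x ∈ S) →
      l.Chain' (fun a b => a * b ≠ 1) → l.prod ≠ 1)
    (p : ℕ) (hp : p.Prime)
    (l : List (Matrix.SpecialLinearGroup (Fin 2) ℤ))
    (hne : l ≠ []) (hmem : ∀ x ∈ l, x ∈ S)
    (hred : l.Chain' (fun a b => a * b ≠ 1))
    (hcong : Matrix.SpecialLinearGroup.map (Int.castRingHom (ZMod p)) l.prod = 1) :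
    (p : ℝ) / 2 ≤
      (S.sup' ⟨l.head hne, hmem _ (l.head_mem hne)⟩ sl2zOpNorm) ^ ((l.length + 1) / 2) :=
  stmt_17_general (hfree l hne hmem hred) hcong fun x hx ↦ S.le_sup' sl2zOpNorm (hmem x hx)
end

section
/- Let G be a finite group, let α ≥ 1 be a real number, and let A ⊆ G be a symmetric subset with 1 ∈ A and |A^(3)| ≤ α·|A|. Then H = A^(3) is a (2α⁵)-approximate subgroup of G containing A: H is symmetric, contains the identity, A ⊆ H, and there exists a symmetric set X ⊆ H·H with |X| ≤ 2α⁵ and H·H ⊆ X·H. -/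
open Pointwise

/-! Small tripling of a symmetric set `A` bounds all its powers: `|A ^ (2 * n + 1)|` is at most
`α ^ (2 * n - 1) * |A|`. By Ruzsa's covering lemma, `A ^ (2 * n)` is then covered by at most
`α ^ (2 * n - 1)` left translates of `A * A⁻¹ = A ^ 2`, which lies in `A ^ n` as soon as `2 ≤ n`.
Adjoining the inverses of the translating elements makes their set symmetric at the cost of a
factor `2`. -/

section InvolutiveInv

variable {G : Type*} [InvolutiveInv G] [DecidableEq G]

lemma inv_eq_self_iff_forall_inv_mem {A : Finset G} : A⁻¹ = A ↔ ∀ a ∈ A, a⁻¹ ∈ A := by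
  rw [← Finset.coe_inj, Finset.coe_inv, Set.inv_eq_self_iff_inv_subset, ← Set.inv_subset_inv,
    inv_inv]
  rfl

lemma exists_inv_eq_self_between {F B : Finset G} (hB : B⁻¹ = B) (hFB : F ⊆ B) :
    ∃ X, F ⊆ X ∧ X ⊆ B ∧ X⁻¹ = X ∧ X.card ≤ 2 * F.card := by
  refine ⟨F ∪ F⁻¹, Finset.subset_union_left, ?_, ?_, ?_⟩
  · exact Finset.union_subset hFB (hB ▸ Finset.inv_subset_inv hFB)
  · rw [← Finset.coe_inj]
    push_cast
    rw [Set.union_inv, inv_inv, Set.union_comm]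
  · calc
      (F ∪ F⁻¹).card ≤ F.card + F⁻¹.card := Finset.card_union_le F F⁻¹
      _ = 2 * F.card := by rw [Finset.card_inv, two_mul]

end InvolutiveInv

lemma exists_pow_subset_mul_sq_of_small_tripling {G : Type*} [Group G] [DecidableEq G]
    {A : Finset G} {K : ℝ} {m : ℕ} (hne : A.Nonempty) (hA : A⁻¹ = A)
    (htrip : ((A ^ 3).card : ℝ) ≤ K * A.card) (hm : 2 ≤ m) :
    ∃ F ⊆ A ^ m, (F.card : ℝ) ≤ K ^ (m - 1) ∧ A ^ m ⊆ F * A ^ 2 := by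
  have hgrowth : ((A ^ m * A).card : ℝ) ≤ K ^ (m - 1) * A.card := by
    rw [← pow_succ]
    exact Finset.small_pow_of_small_tripling (m := m + 1) (by lia) htrip hA
  simpa only [div_eq_mul_inv, hA, sq] using Finset.ruzsa_covering_mul hne hgrowth

theorem stmt_19_general {G : Type*} [Group G] [DecidableEq G] (α : ℝ)
    (A : Finset G) (hsym : ∀ a ∈ A, a⁻¹ ∈ A) (hone : 1 ∈ A)
    (htrip : ((A ^ 3).card : ℝ) ≤ α * A.card) {n : ℕ} (hn : 2 ≤ n) :
    1 ∈ A ^ n ∧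
    (∀ h ∈ A ^ n, h⁻¹ ∈ A ^ n) ∧
    A ⊆ A ^ n ∧
    ∃ X : Finset G, (∀ v ∈ X, v⁻¹ ∈ X) ∧
      X ⊆ A ^ n * A ^ n ∧
      (X.card : ℝ) ≤ 2 * α ^ (2 * n - 1) ∧
      A ^ n * A ^ n ⊆ X * A ^ n := by
  have hA : A⁻¹ = A := inv_eq_self_iff_forall_inv_mem.2 hsym
  have hpow (k : ℕ) : (A ^ k)⁻¹ = A ^ k := by rw [← inv_pow, hA]
  refine ⟨Finset.one_mem_pow hone, inv_eq_self_iff_forall_inv_mem.1 (hpow n),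
    Finset.subset_pow hone (by lia), ?_⟩
  obtain ⟨F, hFsub, hFcard, hFcov⟩ :=
    exists_pow_subset_mul_sq_of_small_tripling (m := 2 * n) ⟨1, hone⟩ hA htrip (by lia)
  obtain ⟨X, hFX, hXsub, hXinv, hXcard⟩ := exists_inv_eq_self_between (hpow (2 * n)) hFsub
  rw [← pow_add, ← two_mul n]
  refine ⟨X, inv_eq_self_iff_forall_inv_mem.1 hXinv, hXsub, ?_, ?_⟩
  · calc
      (X.card : ℝ) ≤ 2 * F.card := mod_cast hXcard
      _ ≤ 2 * α ^ (2 * n - 1) := by gcongr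
  · exact hFcov.trans (Finset.mul_subset_mul hFX (Finset.pow_subset_pow_right hone hn))

/-- **Sets with small tripling give approximate subgroups (Tao; Theorem `th-app-tripling`).**
If `A` is a symmetric subset of a finite group `G` with `1 ∈ A` and `|A^(3)| ≤ α·|A|`,
then `H = A^(3)` is a `(2α⁵)`-approximate subgroup containing `A`: `H` is symmetric,
contains `1`, contains `A`, and there is a symmetric set `X ⊆ H·H` with `|X| ≤ 2α⁵`
and `H·H ⊆ X·H`. -/
theorem stmt_19 {G : Type*} [Group G] [Fintype G] [DecidableEq G]
    (α : ℝ) (hα : 1 ≤ α)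
    (A : Finset G) (hsym : ∀ a ∈ A, a⁻¹ ∈ A) (hone : (1 : G) ∈ A)
    (htrip : ((A ^ 3 : Finset G).card : ℝ) ≤ α * A.card) :
    (1 : G) ∈ (A ^ 3 : Finset G) ∧
    (∀ h ∈ (A ^ 3 : Finset G), h⁻¹ ∈ (A ^ 3 : Finset G)) ∧
    A ⊆ (A ^ 3 : Finset G) ∧
    ∃ X : Finset G, (∀ v ∈ X, v⁻¹ ∈ X) ∧
      X ⊆ (A ^ 3 : Finset G) * (A ^ 3 : Finset G) ∧
      (X.card : ℝ) ≤ 2 * α ^ 5 ∧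
      (A ^ 3 : Finset G) * (A ^ 3 : Finset G) ⊆ X * (A ^ 3 : Finset G) :=
  stmt_19_general α A hsym hone htrip (Nat.le_succ 2)
end
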